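/- Let M be a finite, nonempty language over a single-letter alphabet {a} with M ≠ {ε}, and let n be any natural number strictly greater than the length of every word in M (for instance n = 1 + the maximal word length in M). Then there is no language L over {a} with L^n = M. -/

import Mathlib

/-- Let `M` be a finite nonempty language over the single-letter alphabet `{a}`
with `M ≠ {ε}`, and let `n` exceed the length of every word in `M`.  Then there
is no language `L` over `{a}` with `L ^ n = M`. -/
theorem no_power_root_of_finite_unary_language {α : Type*} (a : α) (M : Language α)
    (hM : ∀ w ∈ M, ∀ c ∈ w, c = a)
    (hfin : M.Finite) (hne : M.Nonempty) (hneq : M ≠ {[]})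
    (n : ℕ) (hn : ∀ w ∈ M, w.length < n) :
    ¬ ∃ L : Language α, (∀ w ∈ L, ∀ c ∈ w, c = a) ∧ L ^ n = M := by
  rintro ⟨L, -, rfl⟩
  have hL : ∀ w ∈ L, w = [] := by
    intro w hw
    have h1 : (List.replicate n w).flatten ∈ L ^ n := by
      rw [Language.mem_pow]
      refine ⟨List.replicate n w, rfl, by simp, ?_⟩
      intro y hy
      rw [List.eq_of_mem_replicate hy]
      exact hw
    have h2 := hn _ h1
    simp only [List.length_flatten, List.map_replicate, List.sum_replicate, smul_eq_mul] at h2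
    by_contra hne'
    have h3 : 0 < w.length := List.length_pos_iff.mpr hne'
    nlinarith
  have hall : ∀ x ∈ L ^ n, x = [] := by
    intro x hx
    rw [Language.mem_pow] at hx
    obtain ⟨S, rfl, -, hS⟩ := hx
    rw [List.flatten_eq_nil_iff]
    exact fun y hy => hL y (hS y hy)
  apply hneq
  obtain ⟨x, hx⟩ := hne
  have hnil : [] ∈ L ^ n := by
    rw [← hall x hx]
    exact hx
  apply Language.ext
  intro y
  constructor
  · intro hy
    exact hall y hy
  · intro hy
    have hy' : y = [] := hy
    rw [hy']
    exact hnil
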